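/- For every parameter α = (α_0, …, α_4) ∈ ℂ^5 and every triple (a, b, c) ∈ ℂ^3, there exists a unique formal meromorphic solution (c_n^i) of the A_4^(1) system at t_0 of pole order 1 with residue vector (c_{−1}^0, …, c_{−1}^4) = (−1, 0, 0, 0, 1) and with c_0^0 = a, c_2^1 = b, c_2^3 = c. Moreover every formal meromorphic solution of pole order 1 with this residue vector satisfies c_0^1 = c_0^2 = c_0^3 = 0, c_0^4 = c_0^0, c_1^1 = −α_1, c_1^2 = α_2/3 and c_1^3 = −α_3. -/

import Mathlib

/-!
With residues `(-1, 0, 0, 0, 1)` the order-`n` part of the recurrence (`n ≥ 0`) is a linear system for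
`x = (cₙ⁰, …, cₙ⁴)` whose right-hand side `s` involves only the coefficients of orders `0, …, n - 1`:
`(n - 2) x₁ = s₁`, `(n + 2) x₂ = s₂`, `(n - 2) x₃ = s₃`, together with
`(n + 1) x₀ - x₄ = s₀ - w` and `(n + 1) x₄ - x₀ = s₄ - w`, where `w = x₁ - x₂ + x₃`.
The last pair has determinant `n (n + 2)`. The system is therefore singular only at `n = 0`, where
`x₀` is free, and at `n = 2`, where `x₁` and `x₃` are free; these are the three parameters.

At `n = 0` the system is solvable because `s = 0`, with solution `x₁ = x₂ = x₃ = 0`, `x₄ = x₀`.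
At `n = 2` it requires `s₁ = s₃ = 0`, which holds because `c₀¹ = c₀³ = 0`, and the factors
`G₀¹`, `G₀³` vanish by the relations at order `0`. `linSys_stepSol` and `eq_stepSol` solve the system at one order,
`recurrence_iff_linSys` reduces the recurrence to it, and `solSeq` runs the recursion.
-/

/-- A formal meromorphic solution of the `A₄⁽¹⁾` system
`fᵢ' = fᵢ (fᵢ₊₁ − fᵢ₊₂ + fᵢ₊₃ − fᵢ₊₄) + αᵢ` (indices mod 5) at a point `t₀`,
of pole order `r ≥ 1`: a family of coefficients `c i n` (`i : Fin 5`, `n : ℤ`)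
vanishing for `n < -r`, with nonzero leading vector, satisfying the formal
Laurent-series recurrence `n cₙⁱ = Σ_{k=-r}^{n+r-1} cₖⁱ G_{n-k-1}ⁱ + δ_{n,1} αᵢ`
where `Gₙⁱ = cₙ^{i+1} − cₙ^{i+2} + cₙ^{i+3} − cₙ^{i+4}`. -/
def IsFormalMeromSolA4 (α : Fin 5 → ℂ) (r : ℤ) (c : Fin 5 → ℤ → ℂ) : Prop :=
  1 ≤ r ∧
  (∃ i : Fin 5, c i (-r) ≠ 0) ∧
  (∀ (i : Fin 5) (n : ℤ), n < -r → c i n = 0) ∧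
  ∀ (i : Fin 5) (n : ℤ),
    (n : ℂ) * c i n =
      (∑ k ∈ Finset.Icc (-r) (n + r - 1),
        c i k * (c (i + 1) (n - k - 1) - c (i + 2) (n - k - 1) +
          c (i + 3) (n - k - 1) - c (i + 4) (n - k - 1))) +
      (if n = 1 then α i else 0)

namespace TypeThirteen

/-! ### The linear system at one order -/

/-- The combination `vᵢ₊₁ - vᵢ₊₂ + vᵢ₊₃ - vᵢ₊₄` multiplying `fᵢ` in the system. -/
def altSum (v : Fin 5 → ℂ) (i : Fin 5) : ℂ :=
  v (i + 1) - v (i + 2) + v (i + 3) - v (i + 4)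

/-- The part of the order-`n` recurrence which involves only coefficients of order in `[0, n)`;
`d k` is the vector of coefficients of order `k`. -/
noncomputable def source (α : Fin 5 → ℂ) (d : ℕ → Fin 5 → ℂ) (n : ℕ) (i : Fin 5) : ℂ :=
  ∑ k ∈ Finset.range n, d k i * altSum (d (n - 1 - k)) i + if n = 1 then α i else 0

/-- The linear system satisfied by the coefficients `x` of order `n`, with right-hand side `s`. -/
def LinSys (n : ℕ) (s x : Fin 5 → ℂ) : Prop :=
  (n + 1) * x 0 + x 1 - x 2 + x 3 - x 4 = s 0 ∧
  (n - 2) * x 1 = s 1 ∧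
  (n + 2) * x 2 = s 2 ∧
  (n - 2) * x 3 = s 3 ∧
  (n + 1) * x 4 - x 0 + x 1 - x 2 + x 3 = s 4

/-- The solution of `LinSys n s` whose free coordinates are `x₀ = a` at `n = 0` and
`x₁ = b`, `x₃ = e` at `n = 2`. -/
noncomputable def stepSol (a b e : ℂ) (n : ℕ) (s : Fin 5 → ℂ) : Fin 5 → ℂ :=
  let x1 := if n = 2 then b else s 1 / (n - 2)
  let x2 := s 2 / (n + 2)
  let x3 := if n = 2 then e else s 3 / (n - 2)
  let p := s 0 - (x1 - x2 + x3)
  let q := s 4 - (x1 - x2 + x3)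
  ![if n = 0 then a else ((n + 1) * p + q) / (n * (n + 2)), x1, x2, x3,
    if n = 0 then a else (p + (n + 1) * q) / (n * (n + 2))]

lemma cast_add_two_ne (n : ℕ) : (n : ℂ) + 2 ≠ 0 := by
  exact_mod_cast (by omega : n + 2 ≠ 0)

lemma cast_sub_two_ne {n : ℕ} (h : n ≠ 2) : (n : ℂ) - 2 ≠ 0 := by
  rw [sub_ne_zero]; exact_mod_cast h

/-- Off the resonances the system is always solvable; at them, the stated conditions suffice. -/
lemma linSys_stepSol (a b e : ℂ) (n : ℕ) (s : Fin 5 → ℂ)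
    (h0 : n = 0 → s = 0) (h2 : n = 2 → s 1 = 0 ∧ s 3 = 0) :
    LinSys n s (stepSol a b e n s) := by
  have hp := cast_add_two_ne n
  rcases eq_or_ne n 0 with rfl | hn0
  · simp [LinSys, stepSol, h0 rfl]
  have hn : (n : ℂ) ≠ 0 := by exact_mod_cast hn0
  simp only [LinSys, stepSol, hn0, if_false, Matrix.cons_val]
  refine ⟨?_, ?_, ?_, ?_, ?_⟩
  · generalize (if n = 2 then b else s 1 / ((n : ℂ) - 2)) = x1
    generalize (if n = 2 then e else s 3 / ((n : ℂ) - 2)) = x3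
    field_simp; ring
  · split_ifs with h
    · subst h; simp [h2 rfl]
    · exact mul_div_cancel₀ _ (cast_sub_two_ne h)
  · exact mul_div_cancel₀ _ hp
  · split_ifs with h
    · subst h; simp [h2 rfl]
    · exact mul_div_cancel₀ _ (cast_sub_two_ne h)
  · generalize (if n = 2 then b else s 1 / ((n : ℂ) - 2)) = x1
    generalize (if n = 2 then e else s 3 / ((n : ℂ) - 2)) = x3
    field_simp; ring

lemma linSys_zero {s x : Fin 5 → ℂ} (hs : s = 0) (h : LinSys 0 s x) :
    x 1 = 0 ∧ x 2 = 0 ∧ x 3 = 0 ∧ x 4 = x 0 := by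
  subst hs
  obtain ⟨e0, e1, e2, e3, e4⟩ := h
  simp only [Nat.cast_zero, Pi.zero_apply] at e0 e1 e2 e3 e4
  refine ⟨?_, ?_, ?_, ?_⟩
  · linear_combination -e1 / 2
  · linear_combination e2 / 2
  · linear_combination -e3 / 2
  · linear_combination -e0 - e1 / 2 - e2 / 2 - e3 / 2

lemma eq_stepSol {a b e : ℂ} {n : ℕ} {s x : Fin 5 → ℂ} (h : LinSys n s x)
    (hs : n = 0 → s = 0) (h0 : n = 0 → x 0 = a) (h2 : n = 2 → x 1 = b ∧ x 3 = e) :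
    x = stepSol a b e n s := by
  obtain ⟨e0, e1, e2, e3, e4⟩ := h
  have hp := cast_add_two_ne n
  have hx1 : x 1 = if n = 2 then b else s 1 / (n - 2) := by
    split_ifs with h
    · exact (h2 h).1
    · rw [eq_div_iff (cast_sub_two_ne h)]; linear_combination e1
  have hx2 : x 2 = s 2 / (n + 2) := by
    rw [eq_div_iff hp]; linear_combination e2
  have hx3 : x 3 = if n = 2 then e else s 3 / (n - 2) := by
    split_ifs with h
    · exact (h2 h).2
    · rw [eq_div_iff (cast_sub_two_ne h)]; linear_combination e3
  funext i
  simp only [stepSol, ← hx1, ← hx2, ← hx3]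
  rcases eq_or_ne n 0 with rfl | hn0
  · obtain ⟨z1, z2, z3, z4⟩ := linSys_zero (hs rfl) ⟨e0, e1, e2, e3, e4⟩
    fin_cases i <;> simp [h0 rfl, z4]
  · have hn : (n : ℂ) ≠ 0 := by exact_mod_cast hn0
    have hd : (n : ℂ) * (n + 2) ≠ 0 := mul_ne_zero hn hp
    fin_cases i
    · simp only [hn0, if_false, Fin.zero_eta, Matrix.cons_val]
      rw [eq_div_iff hd]; linear_combination (n + 1) * e0 + e4
    · rfl
    · rfl
    · rfl
    · simp only [hn0, if_false, Fin.reduceFinMk, Matrix.cons_val]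
      rw [eq_div_iff hd]; linear_combination e0 + (n + 1) * e4

/-! ### The recursion over all orders -/

lemma source_zero (α : Fin 5 → ℂ) (d : ℕ → Fin 5 → ℂ) : source α d 0 = 0 := by
  funext i; simp [source]

lemma source_one (α : Fin 5 → ℂ) (d : ℕ → Fin 5 → ℂ) (i : Fin 5) :
    source α d 1 i = d 0 i * altSum (d 0) i + α i := by
  simp [source]

lemma source_two (α : Fin 5 → ℂ) (d : ℕ → Fin 5 → ℂ) (i : Fin 5) :
    source α d 2 i = d 0 i * altSum (d 1) i + d 1 i * altSum (d 0) i := by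
  simp [source, Finset.sum_range_succ]

lemma source_congr (α : Fin 5 → ℂ) {d d' : ℕ → Fin 5 → ℂ} {n : ℕ}
    (h : ∀ k < n, d k = d' k) : source α d n = source α d' n := by
  funext i
  unfold source
  congr 1
  refine Finset.sum_congr rfl fun k hk => ?_
  have hk := Finset.mem_range.1 hk
  rw [h k hk, h (n - 1 - k) (by omega)]

/-- The coefficients of nonnegative order, computed order by order. Coefficients of order `≥ n` are
replaced by zero in `source`, which does not read them, so that the recursion is well founded. -/
noncomputable def solSeq (α : Fin 5 → ℂ) (a b e : ℂ) (n : ℕ) : Fin 5 → ℂ :=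
  stepSol a b e n (source α (fun k => if _h : k < n then solSeq α a b e k else 0) n)
termination_by n

lemma solSeq_eq (α : Fin 5 → ℂ) (a b e : ℂ) (n : ℕ) :
    solSeq α a b e n = stepSol a b e n (source α (solSeq α a b e) n) := by
  rw [solSeq]
  congr 1
  exact source_congr α fun k hk => by simp [hk]

lemma linSys_solSeq (α : Fin 5 → ℂ) (a b e : ℂ) (n : ℕ) :
    LinSys n (source α (solSeq α a b e) n) (solSeq α a b e n) := by
  have hz : LinSys 0 (source α (solSeq α a b e) 0) (solSeq α a b e 0) := by
    rw [solSeq_eq α a b e 0]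
    exact linSys_stepSol _ _ _ _ _ (fun _ => source_zero _ _) (by simp)
  obtain ⟨z1, z2, z3, z4⟩ := linSys_zero (source_zero _ _) hz
  rw [solSeq_eq α a b e n]
  refine linSys_stepSol _ _ _ _ _ (fun h => h ▸ source_zero _ _) ?_
  rintro rfl
  simp [source_two, altSum, z1, z2, z3, z4]

lemma eq_solSeq {α : Fin 5 → ℂ} {a b e : ℂ} {d : ℕ → Fin 5 → ℂ}
    (h : ∀ n, LinSys n (source α d n) (d n))
    (ha : d 0 0 = a) (hb : d 2 1 = b) (he : d 2 3 = e) : d = solSeq α a b e := by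
  funext n
  induction n using Nat.strong_induction_on with
  | _ n ih =>
    rw [solSeq_eq, ← source_congr α ih]
    refine eq_stepSol (h n) ?_ ?_ ?_
    · rintro rfl; exact source_zero _ _
    · rintro rfl; exact ha
    · rintro rfl; exact ⟨hb, he⟩

/-! ### From the Laurent recurrence to the linear systems -/

/-- For `n ≥ 0`, the extreme terms `k = -1` and `k = n` are the only ones in the convolution which
involve coefficients of order `-1` or `n`. -/
lemma sum_split (u g : ℤ → ℂ) (n : ℕ) :
    ∑ k ∈ Finset.Icc (-1 : ℤ) (n + 1 - 1), u k * g (n - k - 1) =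
      u (-1) * g n + u n * g (-1) +
        ∑ k ∈ Finset.range n, u k * g ((n - 1 - k : ℕ) : ℤ) := by
  have hI : Finset.Icc (-1 : ℤ) (n + 1 - 1) =
      insert (-1) (insert (n : ℤ) ((Finset.range n).map Nat.castEmbedding)) := by
    ext k
    simp only [Finset.mem_Icc, Finset.mem_insert, Finset.mem_map, Finset.mem_range,
      Nat.castEmbedding_apply]
    constructor
    · intro h
      by_cases h1 : k = -1
      · exact Or.inl h1
      by_cases h2 : k = n
      · exact Or.inr (Or.inl h2)
      exact Or.inr (Or.inr ⟨k.toNat, by omega, by omega⟩)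
    · rintro (h | h | ⟨m, h, h'⟩) <;> omega
  rw [hI, Finset.sum_insert, Finset.sum_insert, Finset.sum_map, ← add_assoc]
  · congr 1
    · congr 3 <;> ring
    · refine Finset.sum_congr rfl fun k hk => ?_
      have hk := Finset.mem_range.1 hk
      simp only [Nat.castEmbedding_apply]
      congr 2
      omega
  · simp
  · simp only [Finset.mem_insert, Finset.mem_map, Finset.mem_range, Nat.castEmbedding_apply]
    rintro (h | ⟨m, h, h'⟩) <;> omega

lemma recurrence_iff_linSys (α : Fin 5 → ℂ) {c : Fin 5 → ℤ → ℂ}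
    (r0 : c 0 (-1) = -1) (r1 : c 1 (-1) = 0) (r2 : c 2 (-1) = 0) (r3 : c 3 (-1) = 0)
    (r4 : c 4 (-1) = 1) (n : ℕ) :
    (∀ i : Fin 5, ((n : ℤ) : ℂ) * c i n =
      (∑ k ∈ Finset.Icc (-1 : ℤ) (n + 1 - 1),
        c i k * (c (i + 1) (n - k - 1) - c (i + 2) (n - k - 1) +
          c (i + 3) (n - k - 1) - c (i + 4) (n - k - 1))) +
      (if (n : ℤ) = 1 then α i else 0)) ↔
    LinSys n (source α (fun k i => c i k) n) (fun i => c i n) := by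
  have key (i : Fin 5) : (∑ k ∈ Finset.Icc (-1 : ℤ) (n + 1 - 1),
        c i k * (c (i + 1) (n - k - 1) - c (i + 2) (n - k - 1) +
          c (i + 3) (n - k - 1) - c (i + 4) (n - k - 1))) +
      (if (n : ℤ) = 1 then α i else 0) =
      c i (-1) * altSum (fun j => c j n) i + c i n * altSum (fun j => c j (-1)) i +
        source α (fun k i => c i k) n i := by
    have h := sum_split (c i) (fun m => altSum (fun j => c j m) i) n
    simp only [altSum] at h
    rw [h]
    simp only [source, altSum, Nat.cast_eq_one, add_assoc]
  simp only [key, Fin.forall_fin_succ, IsEmpty.forall_iff, and_true, LinSys]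
  simp [altSum, r0, r1, r2, r3, r4]
  refine and_congr ?_ (and_congr ?_ (and_congr ?_ (and_congr ?_ ?_))) <;>
    constructor <;> intro h <;> linear_combination h

/-- Laurent coefficients with the prescribed residues and nonnegative part `d`. -/
def laurent (d : ℕ → Fin 5 → ℂ) (i : Fin 5) : ℤ → ℂ
  | Int.ofNat n => d n i
  | Int.negSucc 0 => ![-1, 0, 0, 0, 1] i
  | Int.negSucc (_ + 1) => 0

lemma laurent_natCast (d : ℕ → Fin 5 → ℂ) (i : Fin 5) (n : ℕ) : laurent d i n = d n i := rfl

lemma laurent_neg_one (d : ℕ → Fin 5 → ℂ) (i : Fin 5) :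
    laurent d i (-1) = ![-1, 0, 0, 0, 1] i := rfl

lemma laurent_of_lt (d : ℕ → Fin 5 → ℂ) (i : Fin 5) {n : ℤ} (h : n < -1) :
    laurent d i n = 0 := by
  match n, h with
  | Int.ofNat m, h => simp at h; omega
  | Int.negSucc 0, h => simp at h
  | Int.negSucc (m + 1), _ => rfl

lemma isFormalMeromSolA4_laurent {α : Fin 5 → ℂ} {d : ℕ → Fin 5 → ℂ}
    (h : ∀ n, LinSys n (source α d n) (d n)) : IsFormalMeromSolA4 α 1 (laurent d) := by
  refine ⟨le_rfl, ⟨0, by simp [laurent_neg_one]⟩, fun i n hn => laurent_of_lt d i hn, ?_⟩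
  intro i n
  rcases lt_trichotomy n (-1) with hn | rfl | hn
  · rw [laurent_of_lt d i hn, Finset.Icc_eq_empty (by omega), if_neg (by omega)]
    simp
  · have hv : ∀ i : Fin 5, -laurent d i (-1) = laurent d i (-1) *
        altSum (fun j => laurent d j (-1)) i := by
      simp only [Fin.forall_fin_succ, IsEmpty.forall_iff, and_true]
      simp [altSum, laurent_neg_one]
    simpa [altSum] using hv i
  · obtain ⟨m, rfl⟩ := Int.eq_ofNat_of_zero_le (by omega : 0 ≤ n)
    exact (recurrence_iff_linSys α (c := laurent d) rfl rfl rfl rfl rfl m).2 (h m) i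

lemma IsFormalMeromSolA4.linSys {α : Fin 5 → ℂ} {c : Fin 5 → ℤ → ℂ}
    (h : IsFormalMeromSolA4 α 1 c)
    (r0 : c 0 (-1) = -1) (r1 : c 1 (-1) = 0) (r2 : c 2 (-1) = 0) (r3 : c 3 (-1) = 0)
    (r4 : c 4 (-1) = 1) (n : ℕ) :
    LinSys n (source α (fun k i => c i k) n) (fun i => c i n) :=
  (recurrence_iff_linSys α r0 r1 r2 r3 r4 n).1 fun i => h.2.2.2 i n

end TypeThirteen

open TypeThirteen in
/-- For each `α ∈ ℂ⁵` and `(a,b,c) ∈ ℂ³` there is a unique formal meromorphic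
solution of the `A₄⁽¹⁾` system of pole order 1 with residue vector
`(−1,0,0,0,1)` and `c₀⁰ = a`, `c₂¹ = b`, `c₂³ = c`; moreover every
pole-order-1 formal solution with this residue vector satisfies
`c₀¹ = c₀² = c₀³ = 0`, `c₀⁴ = c₀⁰`, `c₁¹ = −α₁`, `c₁² = α₂/3`, `c₁³ = −α₃`. -/
theorem formalSol_type13_A4 (α : Fin 5 → ℂ) (a b cc : ℂ) :
    (∃! c : Fin 5 → ℤ → ℂ,
      IsFormalMeromSolA4 α 1 c ∧
      c 0 (-1) = -1 ∧ c 1 (-1) = 0 ∧ c 2 (-1) = 0 ∧ c 3 (-1) = 0 ∧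
        c 4 (-1) = 1 ∧
      c 0 0 = a ∧ c 1 2 = b ∧ c 3 2 = cc) ∧
    (∀ c : Fin 5 → ℤ → ℂ,
      IsFormalMeromSolA4 α 1 c →
      c 0 (-1) = -1 → c 1 (-1) = 0 → c 2 (-1) = 0 → c 3 (-1) = 0 →
        c 4 (-1) = 1 →
      c 1 0 = 0 ∧ c 2 0 = 0 ∧ c 3 0 = 0 ∧ c 4 0 = c 0 0 ∧
        c 1 1 = -α 1 ∧ c 2 1 = α 2 / 3 ∧ c 3 1 = -α 3) := by
  constructor
  · refine ⟨laurent (solSeq α a b cc), ⟨isFormalMeromSolA4_laurent (linSys_solSeq α a b cc),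
      rfl, rfl, rfl, rfl, rfl, ?_, ?_, ?_⟩, ?_⟩
    · change solSeq α a b cc 0 0 = a
      rw [solSeq_eq]; simp [stepSol]
    · change solSeq α a b cc 2 1 = b
      rw [solSeq_eq]; simp [stepSol]
    · change solSeq α a b cc 2 3 = cc
      rw [solSeq_eq]; simp [stepSol]
    · rintro c ⟨h, r0, r1, r2, r3, r4, ha, hb, he⟩
      have hd := eq_solSeq (IsFormalMeromSolA4.linSys h r0 r1 r2 r3 r4) ha hb he
      funext i n
      rcases lt_trichotomy n (-1) with hn | rfl | hn
      · rw [laurent_of_lt _ _ hn, h.2.2.1 i n hn]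
      · rw [laurent_neg_one]
        fin_cases i <;> simp [r0, r1, r2, r3, r4]
      · obtain ⟨m, rfl⟩ := Int.eq_ofNat_of_zero_le (by omega : 0 ≤ n)
        exact congrFun (congrFun hd m) i
  · intro c h r0 r1 r2 r3 r4
    have hL := IsFormalMeromSolA4.linSys h r0 r1 r2 r3 r4
    obtain ⟨z1, z2, z3, z4⟩ := linSys_zero (source_zero _ _) (hL 0)
    obtain ⟨-, e1, e2, e3, -⟩ := hL 1
    simp only [source_one, altSum, Nat.cast_zero, Nat.cast_one] at z1 z2 z3 z4 e1 e2 e3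
    rw [z1] at e1
    rw [z2] at e2
    rw [z3] at e3
    refine ⟨z1, z2, z3, z4, ?_, ?_, ?_⟩
    · linear_combination -e1
    · linear_combination e2 / 3
    · linear_combination -e3
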